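/- On the Robinson–Trautman spacetime, for constants μ₁, μ₂ and the vector field ξ = μ₁ ∂/∂x + μ₂ ∂/∂y, the Lie derivative of the Ricci tensor satisfies L_ξ S = λ_S S + λ_g g, where λ_S = -(μ₂F₁₃ + μ₁F₁₁)/(f(2a - 4br - F₁)) and λ_g = (4b/r)λ_S, with F₁ = f_x² + f_y² - f(f_{xx}+f_{yy}), F₁₃ = -2f_y³ + f_y(4a - 16br - 2f_x² + f(3f_{yy}+f_{xx})) - f(-2f_x f_{xy} + f(f_{yyy}+f_{xxy})), F₁₁ = -2f_x³ + f_x(4a - 16br - 2f_y² + f(f_{yy}+3f_{xx})) - f(-2f_y f_{xy} + f(f_{xxx}+f_{xyy})), assuming F₁ - 2a + 4br ≠ 0. -/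

import Mathlib

open scoped BigOperators

noncomputable section

/-- Points of the coordinate chart `(t,r,x,y)`. -/
abbrev RTPt := Fin 4 → ℝ

/-- Partial derivative in coordinate direction `i`. -/
def RTpd (i : Fin 4) (F : RTPt → ℝ) (p : RTPt) : ℝ :=
  deriv (fun s => F (Function.update p i s)) (p i)

/-- partial derivative of `f(x,y)` in `x`. -/
def pX (f : ℝ → ℝ → ℝ) (x y : ℝ) : ℝ := deriv (fun s => f s y) x

/-- partial derivative of `f(x,y)` in `y`. -/
def pY (f : ℝ → ℝ → ℝ) (x y : ℝ) : ℝ := deriv (fun s => f x s) y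

/-- The Robinson–Trautman metric components. -/
def RTg (a b d : ℝ) (f : ℝ → ℝ → ℝ) (i j : Fin 4) (p : RTPt) : ℝ :=
  if i = 0 ∧ j = 0 then -2 * (a - 2 * b * p 1 - d / p 1)
  else if (i = 0 ∧ j = 1) ∨ (i = 1 ∧ j = 0) then 1
  else if (i = 2 ∧ j = 2) ∨ (i = 3 ∧ j = 3) then -(p 1)^2 / (f (p 2) (p 3))^2
  else 0

/-- The inverse Robinson–Trautman metric components. -/
def RTgInv (a b d : ℝ) (f : ℝ → ℝ → ℝ) (i j : Fin 4) (p : RTPt) : ℝ :=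
  if i = 1 ∧ j = 1 then 2 * (a - 2 * b * p 1 - d / p 1)
  else if (i = 0 ∧ j = 1) ∨ (i = 1 ∧ j = 0) then 1
  else if (i = 2 ∧ j = 2) ∨ (i = 3 ∧ j = 3) then -(f (p 2) (p 3))^2 / (p 1)^2
  else 0

/-- Christoffel symbols `Γ^k_{ij}` of the Levi-Civita connection of the RT metric. -/
def RTGamma (a b d : ℝ) (f : ℝ → ℝ → ℝ) (k i j : Fin 4) (p : RTPt) : ℝ :=
  (1/2) * ∑ l : Fin 4, RTgInv a b d f k l p *
    (RTpd i (RTg a b d f l j) p + RTpd j (RTg a b d f l i) p - RTpd l (RTg a b d f i j) p)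

/-- `(0,4)` Riemann curvature tensor
`R_{pqrs} = g_{pα}(∂_s Γ^α_{qr} - ∂_r Γ^α_{qs} + Γ^β_{qr}Γ^α_{βs} - Γ^β_{qs}Γ^α_{βr})`. -/
def RTRiem (a b d : ℝ) (f : ℝ → ℝ → ℝ) (i j k l : Fin 4) (p : RTPt) : ℝ :=
  ∑ α : Fin 4, RTg a b d f i α p *
    (RTpd l (RTGamma a b d f α j k) p - RTpd k (RTGamma a b d f α j l) p
      + ∑ β : Fin 4, (RTGamma a b d f β j k p * RTGamma a b d f α β l p
          - RTGamma a b d f β j l p * RTGamma a b d f α β k p))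

/-- Ricci tensor `S_{ij} = R^k_{ikj}` of the RT metric. -/
def RTRic (a b d : ℝ) (f : ℝ → ℝ → ℝ) (i j : Fin 4) (p : RTPt) : ℝ :=
  ∑ k : Fin 4, ∑ l : Fin 4, RTgInv a b d f k l p * RTRiem a b d f l i k j p

/-- Scalar curvature of the RT metric. -/
def RTScal (a b d : ℝ) (f : ℝ → ℝ → ℝ) (p : RTPt) : ℝ :=
  ∑ i : Fin 4, ∑ j : Fin 4, RTgInv a b d f i j p * RTRic a b d f i j p

/-- Lie derivative of a `(0,2)` tensor field along a vector field `X`. -/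
def RTlie2 (X : RTPt → Fin 4 → ℝ) (T : Fin 4 → Fin 4 → RTPt → ℝ) (i j : Fin 4) (p : RTPt) : ℝ :=
  (∑ k : Fin 4, X p k * RTpd k (T i j) p)
  + (∑ k : Fin 4, T k j p * RTpd i (fun q => X q k) p)
  + (∑ k : Fin 4, T i k p * RTpd j (fun q => X q k) p)

/-- Lie derivative of a `(0,4)` tensor field along a vector field `X`. -/
def RTlie4 (X : RTPt → Fin 4 → ℝ) (T : Fin 4 → Fin 4 → Fin 4 → Fin 4 → RTPt → ℝ)
    (i j k l : Fin 4) (p : RTPt) : ℝ :=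
  (∑ m : Fin 4, X p m * RTpd m (T i j k l) p)
  + (∑ m : Fin 4, T m j k l p * RTpd i (fun q => X q m) p)
  + (∑ m : Fin 4, T i m k l p * RTpd j (fun q => X q m) p)
  + (∑ m : Fin 4, T i j m l p * RTpd k (fun q => X q m) p)
  + (∑ m : Fin 4, T i j k m p * RTpd l (fun q => X q m) p)

/-- Kulkarni–Nomizu product of two `(0,2)` tensor fields. -/
def RTKN (A B : Fin 4 → Fin 4 → RTPt → ℝ) (i j k l : Fin 4) (p : RTPt) : ℝ :=
  A i l p * B j k p - A i k p * B j l p + A j k p * B i l p - A j l p * B i k p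

/-- `F₁ = f_x² + f_y² - f(f_{xx} + f_{yy})`. -/
def F1 (f : ℝ → ℝ → ℝ) (x y : ℝ) : ℝ :=
  (pX f x y)^2 + (pY f x y)^2 - f x y * (pX (pX f) x y + pY (pY f) x y)

/-- `F₁ᵐ = f_x² + f_y² - f(f_{xx} - f_{yy})`. -/
def F1m (f : ℝ → ℝ → ℝ) (x y : ℝ) : ℝ :=
  (pX f x y)^2 + (pY f x y)^2 - f x y * (pX (pX f) x y - pY (pY f) x y)

/-- `F₁₁` from the paper. -/
def F11 (a b : ℝ) (f : ℝ → ℝ → ℝ) (r x y : ℝ) : ℝ :=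
  -2*(pX f x y)^3
  + pX f x y * (4*a - 16*b*r - 2*(pY f x y)^2 + f x y * (pY (pY f) x y + 3*pX (pX f) x y))
  - f x y * (-2*pY f x y * pY (pX f) x y + f x y * (pX (pX (pX f)) x y + pY (pY (pX f)) x y))

/-- `F₁₃` from the paper. -/
def F13 (a b : ℝ) (f : ℝ → ℝ → ℝ) (r x y : ℝ) : ℝ :=
  -2*(pY f x y)^3
  + pY f x y * (4*a - 16*b*r - 2*(pX f x y)^2 + f x y * (3*pY (pY f) x y + pX (pX f) x y))
  - f x y * (-2*pX f x y * pY (pX f) x y + f x y * (pY (pY (pY f)) x y + pY (pX (pX f)) x y))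

/-!
The Ricci tensor splits as `S = -(4b/r) g + K (dx² + dy²)` with `K = (F₁ - 2a + 4br) / f²`: the
`(t,r)`-block of `S` is proportional to that of `g` because `H = a - 2br - d/r` satisfies
`H'' + 2H'/r = -4b/r`, and the transverse block is governed by `-Δ log f = F₁ / f²`.
The flow of `ξ = μ₁ ∂_x + μ₂ ∂_y` preserves `dt`, `dr` and `dx² + dy²`, so `L_ξ S` is a multiple of
`dx² + dy²`, namely `ξ((F₁ - 2a + 8br) / f²) = (μ₁ F₁₁ + μ₂ F₁₃) / f³` times it. Eliminating
`dx² + dy²` in favour of `S + (4b/r) g` gives both `λ_S` and `λ_g = (4b/r) λ_S`.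
-/

open Function (uncurry update)
open scoped Topology

section PlanarCalculus

variable {f : ℝ → ℝ → ℝ} {x y : ℝ} {n : WithTop ℕ∞}

lemma hasDerivAt_fderiv_fst (hf : DifferentiableAt ℝ (uncurry f) (x, y)) :
    HasDerivAt (fun s => f s y) (fderiv ℝ (uncurry f) (x, y) (1, 0)) x :=
  hf.hasFDerivAt.comp_hasDerivAt (f := fun s => (s, y)) x
    ((hasDerivAt_id x).prodMk (hasDerivAt_const x y))

lemma hasDerivAt_fderiv_snd (hf : DifferentiableAt ℝ (uncurry f) (x, y)) :
    HasDerivAt (fun s => f x s) (fderiv ℝ (uncurry f) (x, y) (0, 1)) y :=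
  hf.hasFDerivAt.comp_hasDerivAt y ((hasDerivAt_const y x).prodMk (hasDerivAt_id y))

lemma hasDerivAt_pX (hf : DifferentiableAt ℝ (uncurry f) (x, y)) :
    HasDerivAt (fun s => f s y) (pX f x y) x :=
  (hasDerivAt_fderiv_fst hf).differentiableAt.hasDerivAt

lemma hasDerivAt_pY (hf : DifferentiableAt ℝ (uncurry f) (x, y)) :
    HasDerivAt (fun s => f x s) (pY f x y) y :=
  (hasDerivAt_fderiv_snd hf).differentiableAt.hasDerivAt

lemma eventually_differentiableAt_of_contDiffAt {q : ℝ × ℝ} (hf : ContDiffAt ℝ 1 (uncurry f) q) :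
    ∀ᶠ q' in 𝓝 q, DifferentiableAt ℝ (uncurry f) q' :=
  (hf.eventually (by simp)).mono fun _ h => h.differentiableAt one_ne_zero

lemma uncurry_pX_eventuallyEq {q : ℝ × ℝ} (hf : ContDiffAt ℝ 1 (uncurry f) q) :
    uncurry (pX f) =ᶠ[𝓝 q] fun q' => fderiv ℝ (uncurry f) q' (1, 0) :=
  (eventually_differentiableAt_of_contDiffAt hf).mono fun _ h => (hasDerivAt_fderiv_fst h).deriv

lemma uncurry_pY_eventuallyEq {q : ℝ × ℝ} (hf : ContDiffAt ℝ 1 (uncurry f) q) :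
    uncurry (pY f) =ᶠ[𝓝 q] fun q' => fderiv ℝ (uncurry f) q' (0, 1) :=
  (eventually_differentiableAt_of_contDiffAt hf).mono fun _ h => (hasDerivAt_fderiv_snd h).deriv

lemma contDiffAt_uncurry_pX {q : ℝ × ℝ} (hf : ContDiffAt ℝ (n + 1) (uncurry f) q) :
    ContDiffAt ℝ n (uncurry (pX f)) q :=
  ((hf.fderiv_right le_rfl).clm_apply contDiffAt_const).congr_of_eventuallyEq
    (uncurry_pX_eventuallyEq (hf.of_le le_add_self))

lemma contDiffAt_uncurry_pY {q : ℝ × ℝ} (hf : ContDiffAt ℝ (n + 1) (uncurry f) q) :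
    ContDiffAt ℝ n (uncurry (pY f)) q :=
  ((hf.fderiv_right le_rfl).clm_apply contDiffAt_const).congr_of_eventuallyEq
    (uncurry_pY_eventuallyEq (hf.of_le le_add_self))

lemma differentiableAt_uncurry_pX {q : ℝ × ℝ} (hf : ContDiffAt ℝ 2 (uncurry f) q) :
    DifferentiableAt ℝ (uncurry (pX f)) q :=
  (contDiffAt_uncurry_pX (hf.of_le one_add_one_eq_two.le)).differentiableAt one_ne_zero

lemma differentiableAt_uncurry_pY {q : ℝ × ℝ} (hf : ContDiffAt ℝ 2 (uncurry f) q) :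
    DifferentiableAt ℝ (uncurry (pY f)) q :=
  (contDiffAt_uncurry_pY (hf.of_le one_add_one_eq_two.le)).differentiableAt one_ne_zero

lemma pX_pY_comm (hf : ContDiffAt ℝ 2 (uncurry f) (x, y)) :
    pX (pY f) x y = pY (pX f) x y := by
  have hf₁ : ContDiffAt ℝ 1 (uncurry f) (x, y) := hf.of_le one_le_two
  have hDf : DifferentiableAt ℝ (fderiv ℝ (uncurry f)) (x, y) :=
    (hf.fderiv_right one_add_one_eq_two.le).differentiableAt one_ne_zero
  have fderiv_fderiv_apply (v w : ℝ × ℝ) :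
      fderiv ℝ (fun q => fderiv ℝ (uncurry f) q v) (x, y) w =
        fderiv ℝ (fderiv ℝ (uncurry f)) (x, y) w v := by
    simp [fderiv_clm_apply hDf (differentiableAt_const v)]
  have hsymm : IsSymmSndFDerivAt ℝ (uncurry f) (x, y) := hf.isSymmSndFDerivAt (by simp)
  calc pX (pY f) x y
      = fderiv ℝ (uncurry (pY f)) (x, y) (1, 0) :=
        (hasDerivAt_fderiv_fst (differentiableAt_uncurry_pY hf)).deriv
    _ = fderiv ℝ (fderiv ℝ (uncurry f)) (x, y) (1, 0) (0, 1) := by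
        rw [(uncurry_pY_eventuallyEq hf₁).fderiv_eq, fderiv_fderiv_apply]
    _ = fderiv ℝ (fderiv ℝ (uncurry f)) (x, y) (0, 1) (1, 0) := hsymm _ _
    _ = fderiv ℝ (uncurry (pX f)) (x, y) (0, 1) := by
        rw [(uncurry_pX_eventuallyEq hf₁).fderiv_eq, fderiv_fderiv_apply]
    _ = pY (pX f) x y :=
        (hasDerivAt_fderiv_snd (differentiableAt_uncurry_pX hf)).deriv.symm

lemma pX_pY_pY (hf : ContDiffAt ℝ 3 (uncurry f) (x, y)) :
    pX (pY (pY f)) x y = pY (pY (pX f)) x y := by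
  have hcomm : (fun s => pX (pY f) x s) =ᶠ[𝓝 y] fun s => pY (pX f) x s := by
    have hnear : ∀ᶠ q in 𝓝 (x, y), ContDiffAt ℝ 2 (uncurry f) q :=
      (hf.of_le (by norm_num)).eventually (by simp)
    exact ((continuous_const.prodMk continuous_id).tendsto y |>.eventually hnear).mono
      fun _ h => pX_pY_comm h
  rw [pX_pY_comm (contDiffAt_uncurry_pY (hf.of_le two_add_one_eq_three.le))]
  exact hcomm.deriv_eq

end PlanarCalculus

section CoordinateDerivative

variable {F G : RTPt → ℝ} {p : RTPt}

lemma RTpd_congr_of_eventuallyEq (h : F =ᶠ[𝓝 p] G) (i : Fin 4) : RTpd i F p = RTpd i G p := by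
  have hupdate : Filter.Tendsto (update p i) (𝓝 (p i)) (𝓝 p) := by
    simpa using (continuous_const.update i continuous_id : Continuous (update p i)).tendsto (p i)
  exact Filter.EventuallyEq.deriv_eq (hupdate.eventually h)

lemma RTpd_const (i : Fin 4) (c : ℝ) : RTpd i (fun _ => c) p = 0 := deriv_const _ _

lemma RTlie2_const (v : Fin 4 → ℝ) (T : Fin 4 → Fin 4 → RTPt → ℝ) (i j : Fin 4) :
    RTlie2 (fun _ => v) T i j p = ∑ k, v k * RTpd k (T i j) p := by
  simp only [RTlie2, RTpd_const, mul_zero, Finset.sum_const_zero, add_zero]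

end CoordinateDerivative

/-- A point with `r ≠ 0` and `f ≠ 0`, where the coordinate expression of the metric is
nondegenerate, near which `f` is of class `C^n`. -/
structure RTRegularAt (n : ℕ) (f : ℝ → ℝ → ℝ) (p : RTPt) : Prop where
  r_ne_zero : p 1 ≠ 0
  f_ne_zero : f (p 2) (p 3) ≠ 0
  contDiffAt : ContDiffAt ℝ n (uncurry f) (p 2, p 3)

namespace RTRegularAt

variable {m n : ℕ} {f : ℝ → ℝ → ℝ} {p : RTPt}

lemma of_le (h : RTRegularAt n f p) (hmn : m ≤ n) : RTRegularAt m f p :=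
  ⟨h.r_ne_zero, h.f_ne_zero, h.contDiffAt.of_le (by exact_mod_cast hmn)⟩

lemma eventually (h : RTRegularAt n f p) : ∀ᶠ q in 𝓝 p, RTRegularAt n f q := by
  have hproj : ContinuousAt (fun q : RTPt => (q 2, q 3)) p := by fun_prop
  have hr : ∀ᶠ q in 𝓝 p, q 1 ≠ 0 := (continuous_apply 1).continuousAt.eventually_ne h.r_ne_zero
  have hf : ∀ᶠ q in 𝓝 p, f (q 2) (q 3) ≠ 0 :=
    (ContinuousAt.comp (f := fun q : RTPt => (q 2, q 3)) h.contDiffAt.continuousAt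
      hproj).eventually_ne h.f_ne_zero
  have hC : ∀ᶠ q in 𝓝 p, ContDiffAt ℝ n (uncurry f) (q 2, q 3) :=
    hproj.eventually (h.contDiffAt.eventually (by simp))
  filter_upwards [hr, hf, hC] with q hqr hqf hqC using ⟨hqr, hqf, hqC⟩

end RTRegularAt

/-- The radial function `H = a - 2br - d/r` of the metric
`g = 2 dt dr - 2H dt² - (r/f)² (dx² + dy²)`. -/
def RTH (a b d r : ℝ) : ℝ := a - 2 * b * r - d / r

/-- The derivative of `RTH` with respect to `r`. -/
def RTH' (b d r : ℝ) : ℝ := -2 * b + d / r ^ 2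

section Radial

variable (a b d : ℝ) {r : ℝ}

lemma hasDerivAt_RTH (hr : r ≠ 0) : HasDerivAt (RTH a b d) (RTH' b d r) r := by
  refine ((((hasDerivAt_id r).const_mul (2 * b)).const_sub a).fun_sub
    ((hasDerivAt_const r d).fun_div (hasDerivAt_id r) hr)).congr_deriv ?_
  simp only [RTH', id]
  ring

lemma hasDerivAt_RTH' (hr : r ≠ 0) : HasDerivAt (RTH' b d) (-2 * d / r ^ 3) r := by
  refine (((hasDerivAt_const r d).fun_div ((hasDerivAt_id r).fun_pow 2)
    (pow_ne_zero 2 hr)).const_add (-2 * b)).congr_deriv ?_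
  simp only [id]
  field_simp
  ring

/-- The left-hand side is `H''`. -/
lemma RTH_second_deriv_eq (hr : r ≠ 0) :
    -2 * d / r ^ 3 = -4 * b / r - 2 * RTH' b d r / r := by
  simp only [RTH']
  field_simp
  ring

lemma RTH_add_mul_RTH' (hr : r ≠ 0) : RTH a b d r + r * RTH' b d r = a - 4 * b * r := by
  simp only [RTH, RTH']
  field_simp
  ring

end Radial

/-- The logarithmic derivative `f_x / f`. -/
def logDerivX (f : ℝ → ℝ → ℝ) (x y : ℝ) : ℝ := pX f x y / f x y

/-- The logarithmic derivative `f_y / f`. -/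
def logDerivY (f : ℝ → ℝ → ℝ) (x y : ℝ) : ℝ := pY f x y / f x y

section LogDeriv

variable {f : ℝ → ℝ → ℝ} {x y : ℝ}

lemma pX_inv_sq (hf : DifferentiableAt ℝ (uncurry f) (x, y)) (h0 : f x y ≠ 0) :
    pX (fun x y => (f x y ^ 2)⁻¹) x y = -2 * logDerivX f x y / f x y ^ 2 := by
  refine (((hasDerivAt_pX hf).fun_pow 2).fun_inv (pow_ne_zero 2 h0)).deriv.trans ?_
  simp only [logDerivX]
  field_simp
  norm_num
  ring

lemma pY_inv_sq (hf : DifferentiableAt ℝ (uncurry f) (x, y)) (h0 : f x y ≠ 0) :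
    pY (fun x y => (f x y ^ 2)⁻¹) x y = -2 * logDerivY f x y / f x y ^ 2 := by
  refine (((hasDerivAt_pY hf).fun_pow 2).fun_inv (pow_ne_zero 2 h0)).deriv.trans ?_
  simp only [logDerivY]
  field_simp
  norm_num
  ring

variable (hf : ContDiffAt ℝ 2 (uncurry f) (x, y)) (h0 : f x y ≠ 0)
include hf h0

lemma pY_logDerivX_eq_pX_logDerivY : pY (logDerivX f) x y = pX (logDerivY f) x y := by
  have hd := hf.differentiableAt two_ne_zero
  have hX := (hasDerivAt_pY (differentiableAt_uncurry_pX hf)).fun_div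
    (hasDerivAt_pY hd) h0
  have hY := (hasDerivAt_pX (differentiableAt_uncurry_pY hf)).fun_div
    (hasDerivAt_pX hd) h0
  refine hX.deriv.trans (Eq.trans ?_ hY.deriv.symm)
  rw [pX_pY_comm hf, mul_comm (pX f x y)]

lemma pX_logDerivX_add_pY_logDerivY :
    pX (logDerivX f) x y + pY (logDerivY f) x y = -(F1 f x y / f x y ^ 2) := by
  have hd := hf.differentiableAt two_ne_zero
  have hX : pX (logDerivX f) x y = _ :=
    ((hasDerivAt_pX (differentiableAt_uncurry_pX hf)).fun_div
      (hasDerivAt_pX hd) h0).deriv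
  have hY : pY (logDerivY f) x y = _ :=
    ((hasDerivAt_pY (differentiableAt_uncurry_pY hf)).fun_div
      (hasDerivAt_pY hd) h0).deriv
  rw [hX, hY, F1]
  ring

end LogDeriv

/-- The Christoffel symbols in closed form: the matrix `RTchristoffel a b d f p k` has entries
`Γ^k_{ij}` at `p`. -/
def RTchristoffel (a b d : ℝ) (f : ℝ → ℝ → ℝ) (p : RTPt) : Fin 4 → Matrix (Fin 4) (Fin 4) ℝ :=
  let r := p 1
  let H := RTH a b d r
  let H' := RTH' b d r
  let w := (f (p 2) (p 3) ^ 2)⁻¹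
  let u := logDerivX f (p 2) (p 3)
  let v := logDerivY f (p 2) (p 3)
  ![!![H', 0, 0, 0; 0, 0, 0, 0; 0, 0, r * w, 0; 0, 0, 0, r * w],
    !![2 * H * H', -H', 0, 0; -H', 0, 0, 0; 0, 0, 2 * r * H * w, 0; 0, 0, 0, 2 * r * H * w],
    !![0, 0, 0, 0; 0, 0, r⁻¹, 0; 0, r⁻¹, -u, -v; 0, 0, -v, u],
    !![0, 0, 0, 0; 0, 0, 0, r⁻¹; 0, 0, v, -u; 0, r⁻¹, -u, -v]]

section Curvature

variable (a b d : ℝ) {f : ℝ → ℝ → ℝ} {p : RTPt}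

lemma RTpd_RTg (h : RTRegularAt 1 f p) (m i j : Fin 4) :
    RTpd m (RTg a b d f i j) p =
      let r := p 1
      let w := (f (p 2) (p 3) ^ 2)⁻¹
      let u := logDerivX f (p 2) (p 3)
      let v := logDerivY f (p 2) (p 3)
      (![0,
        .diagonal ![-2 * RTH' b d r, 0, -2 * r * w, -2 * r * w],
        .diagonal ![0, 0, 2 * r ^ 2 * w * u, 2 * r ^ 2 * w * u],
        .diagonal ![0, 0, 2 * r ^ 2 * w * v, 2 * r ^ 2 * w * v]] :
        Fin 4 → Matrix (Fin 4) (Fin 4) ℝ) m i j := by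
  have hd := h.contDiffAt.differentiableAt one_ne_zero
  have hH : deriv (fun s => a - 2 * b * s - d * s⁻¹) (p 1) = RTH' b d (p 1) := by
    simp only [← div_eq_mul_inv]
    exact (hasDerivAt_RTH a b d h.r_ne_zero).deriv
  have hX := pX_inv_sq hd h.f_ne_zero
  have hY := pY_inv_sq hd h.f_ne_zero
  rw [pX] at hX
  rw [pY] at hY
  fin_cases m <;> fin_cases i <;> fin_cases j <;>
    simp [RTpd, RTg, update, hH, hX, hY, div_eq_mul_inv] <;> ring

lemma RTGamma_eq_RTchristoffel (h : RTRegularAt 1 f p) (k i j : Fin 4) :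
    RTGamma a b d f k i j p = RTchristoffel a b d f p k i j := by
  have hr := h.r_ne_zero
  have hf := h.f_ne_zero
  simp only [RTGamma, RTpd_RTg a b d h, Fin.sum_univ_four]
  fin_cases k <;> fin_cases i <;> fin_cases j <;>
    simp [RTgInv, RTchristoffel, RTH] <;> field_simp

lemma sum_RTgInv_mul_RTg (hr : p 1 ≠ 0) (hf : f (p 2) (p 3) ≠ 0) (k l : Fin 4) :
    ∑ m, RTgInv a b d f k m p * RTg a b d f m l p = (1 : Matrix (Fin 4) (Fin 4) ℝ) k l := by
  rw [Fin.sum_univ_four]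
  fin_cases k <;> fin_cases l <;> simp [RTgInv, RTg] <;> field_simp

lemma RTRic_eq_sum_RTGamma (hr : p 1 ≠ 0) (hf : f (p 2) (p 3) ≠ 0) (i j : Fin 4) :
    RTRic a b d f i j p = ∑ k, (RTpd j (RTGamma a b d f k i k) p - RTpd k (RTGamma a b d f k i j) p
      + ∑ l, (RTGamma a b d f l i k p * RTGamma a b d f k l j p
        - RTGamma a b d f l i j p * RTGamma a b d f k l k p)) := by
  have contract (k : Fin 4) (W : Fin 4 → ℝ) :
      ∑ m, RTgInv a b d f k m p * ∑ l, RTg a b d f m l p * W l = W k := by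
    simp only [Finset.mul_sum, ← mul_assoc]
    rw [Finset.sum_comm]
    simp only [← Finset.sum_mul, sum_RTgInv_mul_RTg a b d hr hf, Matrix.one_apply, ite_mul,
      one_mul, zero_mul, Finset.sum_ite_eq, Finset.mem_univ, if_true]
  simp only [RTRic, RTRiem, contract]

lemma RTRic_eq_sum_RTchristoffel (h : RTRegularAt 1 f p) (i j : Fin 4) :
    RTRic a b d f i j p =
      ∑ k, RTpd j (fun q => RTchristoffel a b d f q k i k) p
        - ∑ k, RTpd k (fun q => RTchristoffel a b d f q k i j) p
        + ∑ k, ∑ l, (RTchristoffel a b d f p l i k * RTchristoffel a b d f p k l j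
          - RTchristoffel a b d f p l i j * RTchristoffel a b d f p k l k) := by
  have hΓ (k i j : Fin 4) :
      RTGamma a b d f k i j =ᶠ[𝓝 p] fun q => RTchristoffel a b d f q k i j :=
    h.eventually.mono fun q hq => RTGamma_eq_RTchristoffel a b d hq k i j
  simp only [RTRic_eq_sum_RTGamma a b d h.r_ne_zero h.f_ne_zero,
    RTpd_congr_of_eventuallyEq (hΓ _ _ _), (hΓ _ _ _).self_of_nhds, Finset.sum_add_distrib,
    Finset.sum_sub_distrib]

/-- `Γ^k_{ik} = ∂_i log √|g|`, where `√|g| = r² / f²`. -/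
lemma sum_RTpd_RTchristoffel_trace (i j : Fin 4) :
    ∑ k, RTpd j (fun q => RTchristoffel a b d f q k i k) p =
      !![0, 0, 0, 0;
        0, -2 / p 1 ^ 2, 0, 0;
        0, 0, -2 * pX (logDerivX f) (p 2) (p 3), -2 * pY (logDerivX f) (p 2) (p 3);
        0, 0, -2 * pX (logDerivY f) (p 2) (p 3), -2 * pY (logDerivY f) (p 2) (p 3)] i j := by
  rw [Fin.sum_univ_four]
  fin_cases i <;> fin_cases j <;>
    simp [RTpd, RTchristoffel, update, pX, pY] <;> ring

lemma sum_RTpd_RTchristoffel_div (hr : p 1 ≠ 0) (i j : Fin 4) :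
    ∑ k, RTpd k (fun q => RTchristoffel a b d f q k i j) p =
      let r := p 1
      let H := RTH a b d r
      let H' := RTH' b d r
      let H'' := -2 * d / r ^ 3
      let c := 2 * (H + r * H') / f (p 2) (p 3) ^ 2
      let u_x := pX (logDerivX f) (p 2) (p 3)
      let u_y := pY (logDerivX f) (p 2) (p 3)
      let v_x := pX (logDerivY f) (p 2) (p 3)
      let v_y := pY (logDerivY f) (p 2) (p 3)
      !![2 * (H' ^ 2 + H * H''), -H'', 0, 0;
        -H'', 0, 0, 0;
        0, 0, c - u_x + v_y, -v_x - u_y;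
        0, 0, -v_x - u_y, c + u_x - v_y] i j := by
  have hH := hasDerivAt_RTH a b d hr
  have hH' := hasDerivAt_RTH' b d hr
  have hHH' : deriv (fun s => 2 * RTH a b d s * RTH' b d s) (p 1) = _ :=
    ((hH.const_mul 2).fun_mul hH').deriv
  have hrH : deriv (fun s => 2 * s * RTH a b d s) (p 1) = _ :=
    (((hasDerivAt_id (p 1)).const_mul 2).fun_mul hH).deriv
  have hH'' : deriv (fun s => RTH' b d s) (p 1) = _ := hH'.deriv
  rw [Fin.sum_univ_four]
  fin_cases i <;> fin_cases j <;>
    simp [RTpd, RTchristoffel, update, pX, pY, hHH', hrH, hH''] <;> ring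

lemma sum_RTchristoffel_mul_sub (hr : p 1 ≠ 0) (i j : Fin 4) :
    ∑ k, ∑ l, (RTchristoffel a b d f p l i k * RTchristoffel a b d f p k l j
        - RTchristoffel a b d f p l i j * RTchristoffel a b d f p k l k) =
      let r := p 1
      let H := RTH a b d r
      let H' := RTH' b d r
      !![2 * H' ^ 2 - 4 * H * H' / r, 2 * H' / r, 0, 0;
        2 * H' / r, 2 / r ^ 2, 0, 0;
        0, 0, 0, 0;
        0, 0, 0, 0] i j := by
  simp only [Fin.sum_univ_four]
  fin_cases i <;> fin_cases j <;> simp [RTchristoffel] <;> field_simp <;> ring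

/-- The coefficient of `dx² + dy²` in the Ricci tensor. -/
def RTtransverseRicci (a b : ℝ) (f : ℝ → ℝ → ℝ) (r x y : ℝ) : ℝ :=
  (F1 f x y - 2 * a + 8 * b * r) / f x y ^ 2

/-- The degenerate flat metric `dx² + dy²` in the coordinates `(t,r,x,y)`. -/
def RTtransverse : Matrix (Fin 4) (Fin 4) ℝ := .diagonal ![0, 0, 1, 1]

lemma RTRic_eq (h : RTRegularAt 2 f p) (i j : Fin 4) :
    RTRic a b d f i j p =
      let r := p 1
      let H := RTH a b d r
      let Q := RTtransverseRicci a b f r (p 2) (p 3)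
      !![8 * b * H / r, -4 * b / r, 0, 0;
        -4 * b / r, 0, 0, 0;
        0, 0, Q, 0;
        0, 0, 0, Q] i j := by
  have hr := h.r_ne_zero
  have hf := h.f_ne_zero
  have hsymm := pY_logDerivX_eq_pX_logDerivY h.contDiffAt hf
  have hLaplace : pY (logDerivY f) (p 2) (p 3) = _ :=
    eq_sub_of_add_eq' (pX_logDerivX_add_pY_logDerivY h.contDiffAt hf)
  rw [RTRic_eq_sum_RTchristoffel a b d (h.of_le one_le_two), sum_RTpd_RTchristoffel_trace,
    sum_RTpd_RTchristoffel_div a b d hr, sum_RTchristoffel_mul_sub a b d hr]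
  simp only [RTH_second_deriv_eq b d hr, RTH_add_mul_RTH' a b d hr, hsymm, hLaplace,
    RTtransverseRicci]
  fin_cases i <;> fin_cases j <;> simp <;> ring

lemma RTRic_add_mul_RTg (h : RTRegularAt 2 f p) (i j : Fin 4) :
    RTRic a b d f i j p + 4 * b / p 1 * RTg a b d f i j p =
      (F1 f (p 2) (p 3) - 2 * a + 4 * b * p 1) / f (p 2) (p 3) ^ 2 * RTtransverse i j := by
  have hr := h.r_ne_zero
  have hf := h.f_ne_zero
  rw [RTRic_eq a b d h]
  fin_cases i <;> fin_cases j <;>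
    simp [RTg, RTtransverse, RTtransverseRicci, RTH] <;> field_simp <;> ring

lemma pX_RTtransverseRicci {r x y : ℝ} (hf : ContDiffAt ℝ 3 (uncurry f) (x, y))
    (h0 : f x y ≠ 0) :
    pX (RTtransverseRicci a b f r) x y = F11 a b f r x y / f x y ^ 3 := by
  have hfX := contDiffAt_uncurry_pX (hf.of_le two_add_one_eq_three.le)
  have hfY := contDiffAt_uncurry_pY (hf.of_le two_add_one_eq_three.le)
  have dX := hasDerivAt_pX (hf.differentiableAt three_ne_zero)
  have dF1 := (((hasDerivAt_pX (hfX.differentiableAt two_ne_zero)).fun_pow 2).fun_add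
    ((hasDerivAt_pX (hfY.differentiableAt two_ne_zero)).fun_pow 2)).fun_sub
      (dX.fun_mul ((hasDerivAt_pX (differentiableAt_uncurry_pX hfX)).fun_add
        (hasDerivAt_pX (differentiableAt_uncurry_pY hfY))))
  refine (((dF1.sub_const (2 * a)).add_const (8 * b * r)).fun_div (dX.fun_pow 2)
    (pow_ne_zero 2 h0)).deriv.trans ?_
  rw [pX_pY_pY hf, pX_pY_comm (hf.of_le (by norm_num))]
  simp only [F11]
  field_simp
  push_cast
  ring

lemma pY_RTtransverseRicci {r x y : ℝ} (hf : ContDiffAt ℝ 3 (uncurry f) (x, y))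
    (h0 : f x y ≠ 0) :
    pY (RTtransverseRicci a b f r) x y = F13 a b f r x y / f x y ^ 3 := by
  have hfX := contDiffAt_uncurry_pX (hf.of_le two_add_one_eq_three.le)
  have hfY := contDiffAt_uncurry_pY (hf.of_le two_add_one_eq_three.le)
  have dY := hasDerivAt_pY (hf.differentiableAt three_ne_zero)
  have dF1 := (((hasDerivAt_pY (hfX.differentiableAt two_ne_zero)).fun_pow 2).fun_add
    ((hasDerivAt_pY (hfY.differentiableAt two_ne_zero)).fun_pow 2)).fun_sub
      (dY.fun_mul ((hasDerivAt_pY (differentiableAt_uncurry_pX hfX)).fun_add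
        (hasDerivAt_pY (differentiableAt_uncurry_pY hfY))))
  refine (((dF1.sub_const (2 * a)).add_const (8 * b * r)).fun_div (dY.fun_pow 2)
    (pow_ne_zero 2 h0)).deriv.trans ?_
  simp only [F13]
  field_simp
  push_cast
  ring

lemma RTpd_two_RTRic (h : RTRegularAt 3 f p) (i j : Fin 4) :
    RTpd 2 (RTRic a b d f i j) p =
      F11 a b f (p 1) (p 2) (p 3) / f (p 2) (p 3) ^ 3 * RTtransverse i j := by
  have hRic := (h.of_le (by norm_num)).eventually.mono fun q hq => RTRic_eq a b d hq i j
  rw [RTpd_congr_of_eventuallyEq hRic, ← pX_RTtransverseRicci a b h.contDiffAt h.f_ne_zero]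
  fin_cases i <;> fin_cases j <;> simp [RTpd, RTtransverse, update, pX]

lemma RTpd_three_RTRic (h : RTRegularAt 3 f p) (i j : Fin 4) :
    RTpd 3 (RTRic a b d f i j) p =
      F13 a b f (p 1) (p 2) (p 3) / f (p 2) (p 3) ^ 3 * RTtransverse i j := by
  have hRic := (h.of_le (by norm_num)).eventually.mono fun q hq => RTRic_eq a b d hq i j
  rw [RTpd_congr_of_eventuallyEq hRic, ← pY_RTtransverseRicci a b h.contDiffAt h.f_ne_zero]
  fin_cases i <;> fin_cases j <;> simp [RTpd, RTtransverse, update, pY]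

lemma RTlie2_RTRic (h : RTRegularAt 3 f p) (μ₁ μ₂ : ℝ) (i j : Fin 4) :
    RTlie2 (fun _ k => if k = 2 then μ₁ else if k = 3 then μ₂ else 0) (RTRic a b d f) i j p =
      (μ₂ * F13 a b f (p 1) (p 2) (p 3) + μ₁ * F11 a b f (p 1) (p 2) (p 3)) / f (p 2) (p 3) ^ 3 *
        RTtransverse i j := by
  rw [RTlie2_const, Fin.sum_univ_four, RTpd_two_RTRic a b d h, RTpd_three_RTRic a b d h]
  simp only [Fin.reduceEq, if_true, if_false, zero_mul, zero_add]
  ring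

end Curvature

theorem RT_generalized_Ricci_inheritance_general (a b d : ℝ) (f : ℝ → ℝ → ℝ) (p : RTPt)
    (hf : ContDiffAt ℝ 3 (uncurry f) (p 2, p 3)) (hf0 : f (p 2) (p 3) ≠ 0) (hr : p 1 ≠ 0)
    (hF : F1 f (p 2) (p 3) - 2 * a + 4 * b * p 1 ≠ 0) (μ₁ μ₂ : ℝ) (i j : Fin 4) :
    RTlie2 (fun _ k => if k = 2 then μ₁ else if k = 3 then μ₂ else 0)
        (RTRic a b d f) i j p =
      (-(μ₂ * F13 a b f (p 1) (p 2) (p 3) + μ₁ * F11 a b f (p 1) (p 2) (p 3))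
          / (f (p 2) (p 3) * (2 * a - 4 * b * p 1 - F1 f (p 2) (p 3))))
        * RTRic a b d f i j p
      + (4 * b / p 1) *
        (-(μ₂ * F13 a b f (p 1) (p 2) (p 3) + μ₁ * F11 a b f (p 1) (p 2) (p 3))
          / (f (p 2) (p 3) * (2 * a - 4 * b * p 1 - F1 f (p 2) (p 3))))
        * RTg a b d f i j p := by
  have h : RTRegularAt 3 f p := ⟨hr, hf0, hf⟩
  have hRic := RTRic_add_mul_RTg a b d (h.of_le (by norm_num : 2 ≤ 3)) i j
  have hden :
      2 * a - 4 * b * p 1 - F1 f (p 2) (p 3) = -(F1 f (p 2) (p 3) - 2 * a + 4 * b * p 1) := by ring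
  set A := μ₂ * F13 a b f (p 1) (p 2) (p 3) + μ₁ * F11 a b f (p 1) (p 2) (p 3)
  set K := F1 f (p 2) (p 3) - 2 * a + 4 * b * p 1
  calc _ = A / f (p 2) (p 3) ^ 3 * RTtransverse i j := RTlie2_RTRic a b d h μ₁ μ₂ i j
    _ = A / (f (p 2) (p 3) * K) * (K / f (p 2) (p 3) ^ 2 * RTtransverse i j) := by field_simp
    _ = A / (f (p 2) (p 3) * K) * (RTRic a b d f i j p + 4 * b / p 1 * RTg a b d f i j p) := by
        rw [hRic]
    _ = _ := by rw [hden, mul_neg, neg_div_neg_eq]; ring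

/-- generalized Ricci inheritance along `ξ = μ₁ ∂/∂x + μ₂ ∂/∂y`. -/
theorem RT_generalized_Ricci_inheritance (a b d : ℝ) (f : ℝ → ℝ → ℝ)
    (hf : ContDiff ℝ (⊤ : ℕ∞) (Function.uncurry f)) (hf0 : ∀ x y, f x y ≠ 0)
    (μ₁ μ₂ : ℝ) :
    ∀ p : RTPt, p 1 ≠ 0 →
      F1 f (p 2) (p 3) - 2*a + 4*b*p 1 ≠ 0 → ∀ i j : Fin 4,
      RTlie2 (fun _ k => if k = 2 then μ₁ else if k = 3 then μ₂ else 0)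
          (RTRic a b d f) i j p =
        (-(μ₂ * F13 a b f (p 1) (p 2) (p 3) + μ₁ * F11 a b f (p 1) (p 2) (p 3))
            / (f (p 2) (p 3) * (2*a - 4*b*p 1 - F1 f (p 2) (p 3))))
          * RTRic a b d f i j p
        + (4*b/(p 1)) *
          (-(μ₂ * F13 a b f (p 1) (p 2) (p 3) + μ₁ * F11 a b f (p 1) (p 2) (p 3))
            / (f (p 2) (p 3) * (2*a - 4*b*p 1 - F1 f (p 2) (p 3))))
          * RTg a b d f i j p := by
  intro p hr hF i j
  exact RT_generalized_Ricci_inheritance_general a b d f p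
    (hf.contDiffAt.of_le (WithTop.coe_le_coe.2 le_top)) (hf0 _ _) hr hF μ₁ μ₂ i j
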